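/- Suppose f satisfies α F(u) ≤ u f(u) + β u² + α θ for all u > 0, where F(u) := ∫₀^u f(s) ds, for some α > 2, 0 < β ≤ λ₁(α − 2)/2 and θ > 0. Let u be a positive classical solution of the pseudo-parabolic problem and define 𝓕(t) := −(1/2)∫_D |∇_γ u(t)|² dxdy + ∫_D (F(u(t)) − θ) dxdy. Then for all t > 0 in the interval of existence, d/dt ∫_D (u(t)² + |∇_γ u(t)|²) dxdy ≥ 2α 𝓕(t). -/

import Mathlib

open MeasureTheory Real Set Filter
open scoped ENNReal

noncomputable section

/-- The Baouendi–Grushin space `ℝ^m × ℝ^k`. -/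
abbrev GS (m k : ℕ) := EuclideanSpace ℝ (Fin m) × EuclideanSpace ℝ (Fin k)

/-- Unit coordinate vector in the `i`-th `x`-direction. -/
def eX (m k : ℕ) (i : Fin m) : GS m k := (EuclideanSpace.single i (1 : ℝ), 0)

/-- Unit coordinate vector in the `j`-th `y`-direction. -/
def eY (m k : ℕ) (j : Fin k) : GS m k := (0, EuclideanSpace.single j (1 : ℝ))

/-- Squared length `|∇_γ v|²` of the Baouendi–Grushin gradient
`∇_γ v = (∇_x v, |x|^γ ∇_y v)`. -/
def gradSqG {m k : ℕ} (γ : ℝ) (v : GS m k → ℝ) (z : GS m k) : ℝ :=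
  (∑ i, (fderiv ℝ v z (eX m k i)) ^ 2) +
    ‖z.1‖ ^ (2 * γ) * ∑ j, (fderiv ℝ v z (eY m k j)) ^ 2

/-- Pointwise inner product `∇_γ v · ∇_γ w` of Baouendi–Grushin gradients. -/
def dotG {m k : ℕ} (γ : ℝ) (v w : GS m k → ℝ) (z : GS m k) : ℝ :=
  (∑ i, fderiv ℝ v z (eX m k i) * fderiv ℝ w z (eX m k i)) +
    ‖z.1‖ ^ (2 * γ) * ∑ j, fderiv ℝ v z (eY m k j) * fderiv ℝ w z (eY m k j)

/-- The Baouendi–Grushin operator `Δ_γ v = Δ_x v + |x|^{2γ} Δ_y v`. -/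
def lapG {m k : ℕ} (γ : ℝ) (v : GS m k → ℝ) (z : GS m k) : ℝ :=
  (∑ i, fderiv ℝ (fun w => fderiv ℝ v w (eX m k i)) z (eX m k i)) +
    ‖z.1‖ ^ (2 * γ) * ∑ j, fderiv ℝ (fun w => fderiv ℝ v w (eY m k j)) z (eY m k j)

/-- The antiderivative `F(x) = ∫₀ˣ f(s) ds`. -/
def Fprim (f : ℝ → ℝ) (x : ℝ) : ℝ := ∫ s in (0 : ℝ)..x, f s

/-- A domain as in the paper: bounded, open, connected, and such that `D` minus the
degeneracy set `{(x,y) ∈ closure D : x = 0}` consists of only one connected component. -/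
structure GoodDomain (m k : ℕ) (D : Set (GS m k)) : Prop where
  isOpen : IsOpen D
  isConnected : IsConnected D
  isBounded : Bornology.IsBounded D
  conn_off_degeneracy : IsConnected (D \ {z : GS m k | z ∈ closure D ∧ z.1 = 0})

/-- `D` supports the divergence formula: Green's first identity for `Δ_γ` holds for smooth
functions, the first of which vanishes on `∂D`. -/
def SupportsDivFormula {m k : ℕ} (γ : ℝ) (D : Set (GS m k)) : Prop :=
  ∀ v w : GS m k → ℝ, ContDiff ℝ (⊤ : ℕ∞) v → ContDiff ℝ (⊤ : ℕ∞) w →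
    (∀ z ∈ frontier D, v z = 0) →
    ∫ z in D, v z * lapG γ w z = -∫ z in D, dotG γ v w z

/-- The nonlinearity `f`: locally Lipschitz on `ℝ`, `f(0) = 0`, and `f(u) > 0` for `u > 0`. -/
structure GoodNonlinearity (f : ℝ → ℝ) : Prop where
  locallyLipschitz : LocallyLipschitz f
  zero : f 0 = 0
  pos : ∀ s : ℝ, 0 < s → 0 < f s

/-- The initial datum `u₀`: of class `C¹`, non-negative and non-trivial on `closure D`,
vanishing on `∂D`. -/
structure GoodInitialData {m k : ℕ} (D : Set (GS m k)) (u₀ : GS m k → ℝ) : Prop where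
  contDiff : ContDiff ℝ 1 u₀
  nonneg : ∀ z ∈ closure D, 0 ≤ u₀ z
  nontrivial : ∃ z ∈ D, u₀ z ≠ 0
  bdry : ∀ z ∈ frontier D, u₀ z = 0

/-- A positive classical solution `u` of the pseudo-parabolic problem
`u_t − Δ_γ u_t − Δ_γ u = f(u)` in `D × (0,T)`, `u = 0` on `∂D × (0,T)`, `u(0) = u₀`
on `closure D`, where `T ∈ (0,∞]` is the interval of existence; `u` is smooth enough
that all derivatives exist. -/
structure IsPosSolution {m k : ℕ} (γ : ℝ) (D : Set (GS m k)) (f : ℝ → ℝ)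
    (u₀ : GS m k → ℝ) (T : ℝ≥0∞) (u : ℝ → GS m k → ℝ) : Prop where
  smooth : ContDiff ℝ (⊤ : ℕ∞) (fun p : ℝ × GS m k => u p.1 p.2)
  pos : ∀ t : ℝ, 0 < t → ENNReal.ofReal t < T → ∀ z ∈ D, 0 < u t z
  eqn : ∀ t : ℝ, 0 < t → ENNReal.ofReal t < T → ∀ z ∈ D,
    deriv (fun s => u s z) t
      - lapG γ (fun w => deriv (fun s => u s w) t) z
      - lapG γ (u t) z = f (u t z)
  bdry : ∀ t : ℝ, 0 < t → ENNReal.ofReal t < T → ∀ z ∈ frontier D, u t z = 0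
  init : ∀ z ∈ closure D, u 0 z = u₀ z


theorem aux_partial_t {E : Type*} [NormedAddCommGroup E] [NormedSpace ℝ E] {V : ℝ × E → ℝ}
    (hV : ContDiff ℝ (⊤ : ℕ∞) V) (t : ℝ) (z : E) :
    HasDerivAt (fun s => V (s, z)) (fderiv ℝ V (t, z) (1, 0)) t := by
  have h1 : HasFDerivAt V (fderiv ℝ V (t, z)) (t, z) :=
    (hV.differentiable (by simp)).differentiableAt.hasFDerivAt
  have h2 : HasDerivAt (fun s : ℝ => (s, z)) ((1 : ℝ), (0 : E)) t :=
    (hasDerivAt_id t).prodMk (hasDerivAt_const t z)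
  exact h1.comp_hasDerivAt t h2

theorem aux_partial_z {E : Type*} [NormedAddCommGroup E] [NormedSpace ℝ E] {V : ℝ × E → ℝ}
    (hV : ContDiff ℝ (⊤ : ℕ∞) V) (t : ℝ) (z e : E) :
    fderiv ℝ (fun w => V (t, w)) z e = fderiv ℝ V (t, z) (0, e) := by
  have h1 : HasFDerivAt V (fderiv ℝ V (t, z)) (t, z) :=
    (hV.differentiable (by simp)).differentiableAt.hasFDerivAt
  have h2 : HasFDerivAt (fun w : E => (t, w)) (ContinuousLinearMap.inr ℝ ℝ E) z :=
    hasFDerivAt_prodMk_right t z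
  have h3 := h1.comp z h2
  have h4 : fderiv ℝ (fun w => V (t, w)) z = _ := h3.fderiv
  rw [h4]
  simp

theorem aux_smooth_dir {E : Type*} [NormedAddCommGroup E] [NormedSpace ℝ E] {V : E → ℝ}
    (hV : ContDiff ℝ (⊤ : ℕ∞) V) (v : E) :
    ContDiff ℝ (⊤ : ℕ∞) (fun p => fderiv ℝ V p v) :=
  (hV.fderiv_right (by simp)).clm_apply contDiff_const

theorem aux_mixed {E : Type*} [NormedAddCommGroup E] [NormedSpace ℝ E] {V : ℝ × E → ℝ}
    (hV : ContDiff ℝ (⊤ : ℕ∞) V) (t : ℝ) (z e : E) :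
    HasDerivAt (fun s => fderiv ℝ (fun w => V (s, w)) z e)
      (fderiv ℝ (fun w => fderiv ℝ V (t, w) (1, 0)) z e) t := by
  have h1 := aux_partial_t (aux_smooth_dir hV (0, e)) t z
  have h2 : (fun s => fderiv ℝ (fun w => V (s, w)) z e) =
      fun s => fderiv ℝ V (s, z) (0, e) := by
    funext s; exact aux_partial_z hV s z e
  rw [h2, aux_partial_z (V := fun p => fderiv ℝ V p (1, 0)) (aux_smooth_dir hV (1, 0)) t z e]
  convert h1 using 1
  have hd : DifferentiableAt ℝ (fderiv ℝ V) (t, z) :=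
    ((hV.fderiv_right (m := (⊤ : ℕ∞)) (by simp)).differentiable (by simp)).differentiableAt
  have hs : IsSymmSndFDerivAt ℝ V (t, z) :=
    hV.contDiffAt.isSymmSndFDerivAt (by
      rw [minSmoothness_of_isRCLikeNormedField]
      exact WithTop.coe_le_coe.2 (le_top : (2 : ℕ∞) ≤ ⊤))
  have e1 : ∀ v w : ℝ × E, fderiv ℝ (fun p => fderiv ℝ V p v) (t, z) w
      = fderiv ℝ (fderiv ℝ V) (t, z) w v := by
    intro v w
    rw [fderiv_clm_apply hd (differentiableAt_const v)]
    simp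
  rw [e1, e1]
  exact hs _ _

theorem aux_integrable {m k : ℕ} {D : Set (GS m k)} (hb : Bornology.IsBounded D)
    {g : GS m k → ℝ} (hg : Continuous g) : IntegrableOn g D volume :=
  (hg.continuousOn.integrableOn_compact hb.isCompact_closure).mono_set subset_closure

theorem aux_deriv_int {m k : ℕ} {D : Set (GS m k)} (ho : MeasurableSet D)
    (hb : Bornology.IsBounded D)
    {G G' : ℝ → GS m k → ℝ} (hG : Continuous fun p : ℝ × GS m k => G p.1 p.2)
    (hG' : Continuous fun p : ℝ × GS m k => G' p.1 p.2)
    (hd : ∀ s z, HasDerivAt (fun r => G r z) (G' s z) s) (t : ℝ) :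
    HasDerivAt (fun s => ∫ z in D, G s z) (∫ z in D, G' t z) t := by
  have hK : IsCompact (Icc (t - 1) (t + 1) ×ˢ closure D) :=
    isCompact_Icc.prod hb.isCompact_closure
  obtain ⟨C, hC⟩ := hK.exists_bound_of_continuousOn hG'.continuousOn
  have c1 : ∀ s, Continuous (G s) := fun s => hG.comp (Continuous.prodMk_right s)
  have c2 : ∀ s, Continuous (G' s) := fun s => hG'.comp (Continuous.prodMk_right s)
  refine (hasDerivAt_integral_of_dominated_loc_of_deriv_le (s := Icc (t - 1) (t + 1))
    (bound := fun _ => C) (Icc_mem_nhds (by linarith) (by linarith))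
    (Eventually.of_forall fun s => (c1 s).aestronglyMeasurable)
    (aux_integrable hb (c1 t)) (c2 t).aestronglyMeasurable ?_
    (aux_integrable hb continuous_const) ?_).2
  · refine (ae_restrict_iff' ho).2 (Eventually.of_forall fun z hz s hs => ?_)
    exact hC (s, z) ⟨hs, subset_closure hz⟩
  · exact Eventually.of_forall fun z s _ => hd s z

theorem aux_weight {m k : ℕ} {γ : ℝ} (hγ : 0 ≤ γ) :
    Continuous fun z : GS m k => ‖z.1‖ ^ (2 * γ) :=
  (continuous_fst.norm).rpow_const fun _ => Or.inr (by positivity)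

theorem aux_dot_cont {m k : ℕ} {γ : ℝ} (hγ : 0 ≤ γ) {v w : GS m k → ℝ}
    (hv : ContDiff ℝ (⊤ : ℕ∞) v) (hw : ContDiff ℝ (⊤ : ℕ∞) w) : Continuous (dotG γ v w) := by
  have h1 := fun e => (aux_smooth_dir hv e).continuous
  have h2 := fun e => (aux_smooth_dir hw e).continuous
  unfold dotG
  exact (continuous_finsetSum _ fun i _ => (h1 _).mul (h2 _)).add
    ((aux_weight hγ).mul (continuous_finsetSum _ fun i _ => (h1 _).mul (h2 _)))

theorem aux_lap_cont {m k : ℕ} {γ : ℝ} (hγ : 0 ≤ γ) {v : GS m k → ℝ}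
    (hv : ContDiff ℝ (⊤ : ℕ∞) v) : Continuous (lapG γ v) := by
  have h1 := fun e e' => (aux_smooth_dir (aux_smooth_dir hv e) e').continuous
  unfold lapG
  exact (continuous_finsetSum _ fun i _ => h1 _ _).add
    ((aux_weight hγ).mul (continuous_finsetSum _ fun i _ => h1 _ _))

theorem aux_grad_eq {m k : ℕ} (γ : ℝ) (v : GS m k → ℝ) : gradSqG γ v = dotG γ v v := by
  funext z; simp only [gradSqG, dotG, pow_two]

theorem aux_energy_deriv {m k : ℕ} {γ : ℝ} (hγ : 0 ≤ γ) {D : Set (GS m k)}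
    (ho : MeasurableSet D) (hb : Bornology.IsBounded D) {u : ℝ → GS m k → ℝ}
    (hu : ContDiff ℝ (⊤ : ℕ∞) (fun p : ℝ × GS m k => u p.1 p.2)) (t : ℝ) :
    HasDerivAt (fun s => ∫ z in D, ((u s z) ^ 2 + gradSqG γ (u s) z))
      (∫ z in D, (2 * (u t z * deriv (fun s => u s z) t)
        + 2 * dotG γ (u t) (fun w => deriv (fun s => u s w) t) z)) t := by
  set V : ℝ × GS m k → ℝ := fun p => u p.1 p.2 with hVdef
  have ht : ∀ s z, deriv (fun r => u r z) s = fderiv ℝ V (s, z) (1, 0) :=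
    fun s z => (aux_partial_t hu s z).deriv
  have hz : ∀ s z e, fderiv ℝ (u s) z e = fderiv ℝ V (s, z) (0, e) :=
    fun s z e => aux_partial_z hu s z e
  have htz : ∀ s z e, fderiv ℝ (fun w => deriv (fun r => u r w) s) z e =
      fderiv ℝ (fun p => fderiv ℝ V p (1, 0)) (s, z) (0, e) := by
    intro s z e
    simp only [ht]
    exact aux_partial_z (aux_smooth_dir hu (1, 0)) s z e
  have hdz : ∀ s z e, HasDerivAt (fun r => fderiv ℝ (u r) z e)
      (fderiv ℝ (fun w => deriv (fun r => u r w) s) z e) s := by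
    intro s z e
    have := aux_mixed hu s z e
    simp only [ht]
    exact this
  have hdt : ∀ s z, HasDerivAt (fun r => u r z) (deriv (fun r => u r z) s) s := by
    intro s z
    rw [ht]; exact aux_partial_t hu s z
  have cw : Continuous fun p : ℝ × GS m k => ‖p.2.1‖ ^ (2 * γ) :=
    (aux_weight hγ).comp continuous_snd
  have cz := fun e => (aux_smooth_dir hu (0, e)).continuous
  have ctz := fun e => (aux_smooth_dir (aux_smooth_dir hu (1, 0)) (0, e)).continuous
  have ct := (aux_smooth_dir hu (1, 0)).continuous
  refine aux_deriv_int ho hb (G := fun s z => (u s z) ^ 2 + gradSqG γ (u s) z)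
    (G' := fun s z => 2 * (u s z * deriv (fun r => u r z) s)
        + 2 * dotG γ (u s) (fun w => deriv (fun r => u r w) s) z) ?_ ?_ ?_ t
  · simp only [gradSqG, hz]
    exact (hu.continuous.pow 2).add ((continuous_finsetSum _ fun i _ => (cz _).pow 2).add
      (cw.mul (continuous_finsetSum _ fun i _ => (cz _).pow 2)))
  · simp only [dotG, htz, hz]
    simp only [ht]
    exact (continuous_const.mul (hu.continuous.mul ct)).add (continuous_const.mul
      ((continuous_finsetSum _ fun i _ => (cz _).mul (ctz _)).add
      (cw.mul (continuous_finsetSum _ fun i _ => (cz _).mul (ctz _)))))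
  · intro s z
    have h1 := (hdt s z).pow 2
    have h2 := HasDerivAt.fun_sum (u := Finset.univ) fun (i : Fin m) _ =>
      (hdz s z (eX m k i)).pow 2
    have h3 := (HasDerivAt.fun_sum (u := Finset.univ) fun (i : Fin k) _ =>
      (hdz s z (eY m k i)).pow 2).const_mul (‖z.1‖ ^ (2 * γ))
    refine (h1.add (h2.add h3)).congr_deriv ?_
    simp only [dotG, mul_add, Finset.mul_sum]
    congr 1
    · ring
    · congr 1
      · exact Finset.sum_congr rfl fun i _ => by ring
      · exact Finset.sum_congr rfl fun i _ => by ring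

/-- **Differential inequality for blow-up.** Under the growth condition
`α F(u) ≤ u f(u) + β u² + α θ` with `α > 2`, `0 < β ≤ λ₁(α−2)/2`, `θ > 0`, for a
positive classical solution `u` of the pseudo-parabolic problem one has
`d/dt ∫_D (u² + |∇_γ u|²) ≥ 2α 𝓕(t)` for every `t > 0` in the interval of existence,
where `𝓕(t) := −(1/2)∫_D |∇_γ u(t)|² + ∫_D (F(u(t)) − θ)`. -/
theorem grushin_differential_inequality
    (m k : ℕ) (hm : 1 ≤ m) (hk : 1 ≤ k) (γ : ℝ) (hγ : 0 ≤ γ)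
    (D : Set (GS m k)) (hD : GoodDomain m k D) (hDiv : SupportsDivFormula γ D)
    (f : ℝ → ℝ) (hf : GoodNonlinearity f)
    (α β θ lam1 : ℝ) (hα : 2 < α) (hβpos : 0 < β) (hβ : β ≤ lam1 * (α - 2) / 2)
    (hθ : 0 < θ) (hlam1 : 0 < lam1)
    (hPoincare : ∀ v : GS m k → ℝ, ContDiff ℝ 1 v → (∀ z ∈ frontier D, v z = 0) →
      lam1 * ∫ z in D, (v z) ^ 2 ≤ ∫ z in D, gradSqG γ v z)
    (hgrowth : ∀ s : ℝ, 0 < s → α * Fprim f s ≤ s * f s + β * s ^ 2 + α * θ)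
    (u₀ : GS m k → ℝ) (T : ℝ≥0∞) (hT : 0 < T) (u : ℝ → GS m k → ℝ)
    (hu : IsPosSolution γ D f u₀ T u) :
    ∀ t : ℝ, 0 < t → ENNReal.ofReal t < T →
      ∃ d : ℝ,
        HasDerivAt (fun s => ∫ z in D, ((u s z) ^ 2 + gradSqG γ (u s) z)) d t ∧
        2 * α * (-(1 / 2) * (∫ z in D, gradSqG γ (u t) z)
          + ∫ z in D, (Fprim f (u t z) - θ)) ≤ d := by
  intro t ht0 htT
  have ho : MeasurableSet D := hD.isOpen.measurableSet
  have hb := hD.isBounded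
  refine ⟨_, aux_energy_deriv hγ ho hb hu.smooth t, ?_⟩
  have su : ContDiff ℝ (⊤ : ℕ∞) (u t) := hu.smooth.comp (contDiff_prodMk_right t)
  have sv : ContDiff ℝ (⊤ : ℕ∞) (fun w => deriv (fun s => u s w) t) := by
    have : (fun w => deriv (fun s => u s w) t) =
        fun w => fderiv ℝ (fun p : ℝ × GS m k => u p.1 p.2) (t, w) (1, 0) := by
      funext w; exact (aux_partial_t hu.smooth t w).deriv
    rw [this]
    exact (aux_smooth_dir hu.smooth (1, 0)).comp (contDiff_prodMk_right t)
  have heq := hu.eqn t ht0 htT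
  have hpos := hu.pos t ht0 htT
  have hbd := hu.bdry t ht0 htT
  have hP := hPoincare (u t) (su.of_le (by exact_mod_cast le_top)) hbd
  have g1 := hDiv _ _ su sv hbd
  have g2 := hDiv _ _ su su hbd
  rw [← aux_grad_eq] at g2
  set v : GS m k → ℝ := fun w => deriv (fun s => u s w) t with hv
  have cf : Continuous f := hf.locallyLipschitz.continuous
  have cF : Continuous (Fprim f) :=
    intervalIntegral.continuous_primitive (fun a b => cf.intervalIntegrable a b) 0
  have cu := su.continuous
  have cv := sv.continuous
  have i1 : IntegrableOn (fun z => u t z * v z) D := aux_integrable hb (cu.mul cv)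
  have i2 : IntegrableOn (dotG γ (u t) v) D := aux_integrable hb (aux_dot_cont hγ su sv)
  have i3 : IntegrableOn (fun z => u t z * lapG γ v z) D :=
    aux_integrable hb (cu.mul (aux_lap_cont hγ sv))
  have i4 : IntegrableOn (fun z => u t z * lapG γ (u t) z) D :=
    aux_integrable hb (cu.mul (aux_lap_cont hγ su))
  have i5 : IntegrableOn (fun z => u t z * f (u t z)) D :=
    aux_integrable hb (cu.mul (cf.comp cu))
  have i6 : IntegrableOn (fun z => Fprim f (u t z) - θ) D :=
    aux_integrable hb ((cF.comp cu).sub continuous_const)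
  have i7 : IntegrableOn (fun z => (u t z) ^ 2) D := aux_integrable hb (cu.pow 2)
  have e1 : ∫ z in D, (2 * (u t z * v z) + 2 * dotG γ (u t) v z)
      = 2 * (∫ z in D, u t z * v z) + 2 * ∫ z in D, dotG γ (u t) v z := by
    rw [integral_add (i1.const_mul 2) (i2.const_mul 2), integral_const_mul, integral_const_mul]
  have e2 : ∫ z in D, u t z * v z = (∫ z in D, u t z * lapG γ v z)
      + ((∫ z in D, u t z * lapG γ (u t) z) + ∫ z in D, u t z * f (u t z)) := by
    have i45 : IntegrableOn (fun z => u t z * lapG γ (u t) z + u t z * f (u t z)) D := i4.add i5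
    rw [← integral_add i4 i5, ← integral_add i3 i45]
    refine setIntegral_congr_fun ho fun z hz => ?_
    have := heq z hz
    change u t z * v z = u t z * lapG γ v z + (u t z * lapG γ (u t) z + u t z * f (u t z))
    rw [← this]
    ring
  have e3 : α * (∫ z in D, (Fprim f (u t z) - θ))
      ≤ (∫ z in D, u t z * f (u t z)) + β * ∫ z in D, (u t z) ^ 2 := by
    rw [← integral_const_mul, ← integral_const_mul, ← integral_add i5 (i7.const_mul β)]
    refine setIntegral_mono_on (i6.const_mul α) (i5.add (i7.const_mul β)) ho fun z hz => ?_
    have := hgrowth _ (hpos z hz)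
    linarith
  have e4 : 0 ≤ ∫ z in D, (u t z) ^ 2 := integral_nonneg fun z => sq_nonneg _
  have e5 : β * (∫ z in D, (u t z) ^ 2) ≤ (α - 2) / 2 * ∫ z in D, gradSqG γ (u t) z := by
    calc β * (∫ z in D, (u t z) ^ 2) ≤ lam1 * (α - 2) / 2 * ∫ z in D, (u t z) ^ 2 :=
          mul_le_mul_of_nonneg_right hβ e4
      _ = (α - 2) / 2 * (lam1 * ∫ z in D, (u t z) ^ 2) := by ring
      _ ≤ _ := mul_le_mul_of_nonneg_left hP (by linarith)
  change _ ≤ ∫ z in D, (2 * (u t z * v z) + 2 * dotG γ (u t) v z)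
  rw [e1]
  linarith
end
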